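/- Let (A, μ, α, β) be a unitary BiHom-associative algebra with α, β bijective, and let ψ, ω : A → A be linear maps with ψ(ab) = ψ(a)ψ(b), ω(ab) = ω(a)ω(b), ψ(1_A) = ω(1_A) = 1_A, such that any two of α, β, ψ, ω commute. Let r ∈ A⊗A be α-, β-, ψ-, and ω-invariant, set s = r − 1_A⊗1_A, and define δ_r(a) = α⁻¹(a)▷r − r◁β⁻¹(a), δ_s(a) = α⁻¹(a)▷s − s◁β⁻¹(a), Δ(a) = α⁻¹(a)▷r − s◁β⁻¹(a). Then (A, μ, δ_r, δ_s, Δ, α, β, ψ, ω) is a unitary quasitriangular covariant BiHom-bialgebra (i.e., a quasitriangular covariant BiHom-bialgebra with Δ(1_A) = 1_A⊗1_A) if and only if ω(r¹)⊗1_A⊗ψ(r²) = r₁₃r₁₂ − r₁₂r₂₃ + r₂₃r₁₃ (i.e., r satisfies the associative BiHom-Yang-Baxter equation of weight −1); equivalently, if and only if (ω⊗Δ)(r) = r₁₃r₁₂ and (Δ⊗ψ)(r) = −r₂₃r₁₃ + 1_A⊗r¹⊗r² + ω(r¹)⊗1_A⊗ψ(r²). -/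

import Mathlib

open TensorProduct

section Defs

variable {K A : Type*} [Field K] [NonUnitalNonAssocRing A] [Module K A]
  [SMulCommClass K A A] [IsScalarTower K A A]

/-- The left action of `A` on `A⊗A`: `a ▷ (x⊗y) = ω(a)x ⊗ β(y)`. -/
noncomputable def lT2 (β ω : A →ₗ[K] A) (a : A) : A ⊗[K] A →ₗ[K] A ⊗[K] A :=
  TensorProduct.map (LinearMap.mulLeft K (ω a)) β

/-- The right action of `A` on `A⊗A`: `(x⊗y) ◁ a = α(x) ⊗ yψ(a)`. -/
noncomputable def rT2 (α ψ : A →ₗ[K] A) (a : A) : A ⊗[K] A →ₗ[K] A ⊗[K] A :=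
  TensorProduct.map α (LinearMap.mulRight K (ψ a))

/-- The left action of `A` on `A⊗A⊗A`: `a ▷ (x⊗y⊗z) = ω(a)x ⊗ β(y) ⊗ β(z)`. -/
noncomputable def lT3 (β ω : A →ₗ[K] A) (a : A) :
    A ⊗[K] (A ⊗[K] A) →ₗ[K] A ⊗[K] (A ⊗[K] A) :=
  TensorProduct.map (LinearMap.mulLeft K (ω a)) (TensorProduct.map β β)

/-- The right action of `A` on `A⊗A⊗A`: `(x⊗y⊗z) ◁ a = α(x) ⊗ α(y) ⊗ zψ(a)`. -/
noncomputable def rT3 (α ψ : A →ₗ[K] A) (a : A) :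
    A ⊗[K] (A ⊗[K] A) →ₗ[K] A ⊗[K] (A ⊗[K] A) :=
  TensorProduct.map α (TensorProduct.map α (LinearMap.mulRight K (ψ a)))

/-- The left action, bundled as a linear map in the acting variable. -/
noncomputable def lT2hom (β ω : A →ₗ[K] A) : A →ₗ[K] (A ⊗[K] A →ₗ[K] A ⊗[K] A) :=
  TensorProduct.homTensorHomMap (RingHom.id K) A A A A ∘ₗ
    (TensorProduct.mk K (A →ₗ[K] A) (A →ₗ[K] A)).flip β ∘ₗ LinearMap.mul K A ∘ₗ ω

/-- The right action, bundled as a linear map in the acting variable. -/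
noncomputable def rT2hom (α ψ : A →ₗ[K] A) : A →ₗ[K] (A ⊗[K] A →ₗ[K] A ⊗[K] A) :=
  TensorProduct.homTensorHomMap (RingHom.id K) A A A A ∘ₗ
    TensorProduct.mk K (A →ₗ[K] A) (A →ₗ[K] A) α ∘ₗ (LinearMap.mul K A).flip ∘ₗ ψ

/-- `a ↦ α⁻¹(a) ▷ r − s ◁ β⁻¹(a)`, as a linear map `A → A⊗A`. -/
noncomputable def deltaOp (α β : A ≃ₗ[K] A) (ψ ω : A →ₗ[K] A) (r s : A ⊗[K] A) :
    A →ₗ[K] A ⊗[K] A :=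
  (lT2hom β.toLinearMap ω).flip r ∘ₗ α.symm.toLinearMap -
    (rT2hom α.toLinearMap ψ).flip s ∘ₗ β.symm.toLinearMap

/-- `r₁₂s₂₃ = α(r¹) ⊗ r²s¹ ⊗ β(s²)`, as a linear map on `(A⊗A)⊗(A⊗A)`. -/
noncomputable def m1223 (α β : A →ₗ[K] A) :
    (A ⊗[K] A) ⊗[K] (A ⊗[K] A) →ₗ[K] A ⊗[K] (A ⊗[K] A) :=
  TensorProduct.map α (TensorProduct.map (LinearMap.mul' K A) β) ∘ₗ
    TensorProduct.map LinearMap.id (TensorProduct.assoc K A A A).symm.toLinearMap ∘ₗ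
    (TensorProduct.assoc K A A (A ⊗[K] A)).toLinearMap

/-- `r₁₃s₁₂ = ω(r¹)s¹ ⊗ β(s²) ⊗ αψ(r²)`. -/
noncomputable def m1312 (α β ψ ω : A →ₗ[K] A) :
    (A ⊗[K] A) ⊗[K] (A ⊗[K] A) →ₗ[K] A ⊗[K] (A ⊗[K] A) :=
  TensorProduct.map (LinearMap.mul' K A ∘ₗ TensorProduct.map ω LinearMap.id)
      ((TensorProduct.comm K A A).toLinearMap ∘ₗ TensorProduct.map (α ∘ₗ ψ) β) ∘ₗ
    (TensorProduct.tensorTensorTensorComm K A A A A).toLinearMap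

/-- `r₂₃s₁₃ = βω(s¹) ⊗ α(r¹) ⊗ r²ψ(s²)`. -/
noncomputable def m2313 (α β ψ ω : A →ₗ[K] A) :
    (A ⊗[K] A) ⊗[K] (A ⊗[K] A) →ₗ[K] A ⊗[K] (A ⊗[K] A) :=
  (TensorProduct.assoc K A A A).toLinearMap ∘ₗ
    TensorProduct.map ((TensorProduct.comm K A A).toLinearMap ∘ₗ TensorProduct.map α (β ∘ₗ ω))
      (LinearMap.mul' K A ∘ₗ TensorProduct.map LinearMap.id ψ) ∘ₗ
    (TensorProduct.tensorTensorTensorComm K A A A A).toLinearMap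

end Defs

/-- The coalgebra-side axioms of a covariant BiHom-bialgebra
`(A, μ, δ₁, δ₂, Δ, α, β, ψ, ω)`: `Δ` is compatible with `α, β, ψ, ω` and
BiHom-coassociative, `δ₁, δ₂` are BiHom-derivations, and `Δ` is a covariant
BiHom-derivation with respect to `(δ₁, δ₂)`. -/
noncomputable def IsCovariantBiHomBialgebra {K A : Type*} [Field K]
    [NonUnitalNonAssocRing A] [Module K A] [SMulCommClass K A A] [IsScalarTower K A A]
    (α β ψ ω : A →ₗ[K] A) (δ₁ δ₂ Δ : A →ₗ[K] A ⊗[K] A) : Prop :=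
  (∀ a, TensorProduct.map ψ ψ (Δ a) = Δ (ψ a)) ∧
  (∀ a, TensorProduct.map ω ω (Δ a) = Δ (ω a)) ∧
  (∀ a, TensorProduct.map α α (Δ a) = Δ (α a)) ∧
  (∀ a, TensorProduct.map β β (Δ a) = Δ (β a)) ∧
  -- BiHom-coassociativity: (Δ⊗ψ)∘Δ = (ω⊗Δ)∘Δ
  (∀ a, TensorProduct.assoc K A A A (TensorProduct.map Δ ψ (Δ a)) =
    TensorProduct.map ω Δ (Δ a)) ∧
  -- δ₁ is a BiHom-derivation
  (∀ a, TensorProduct.map α α (δ₁ a) = δ₁ (α a)) ∧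
  (∀ a, TensorProduct.map β β (δ₁ a) = δ₁ (β a)) ∧
  (∀ a, TensorProduct.map ψ ψ (δ₁ a) = δ₁ (ψ a)) ∧
  (∀ a, TensorProduct.map ω ω (δ₁ a) = δ₁ (ω a)) ∧
  (∀ a b, δ₁ (a * b) = lT2 β ω a (δ₁ b) + rT2 α ψ b (δ₁ a)) ∧
  -- δ₂ is a BiHom-derivation
  (∀ a, TensorProduct.map α α (δ₂ a) = δ₂ (α a)) ∧
  (∀ a, TensorProduct.map β β (δ₂ a) = δ₂ (β a)) ∧
  (∀ a, TensorProduct.map ψ ψ (δ₂ a) = δ₂ (ψ a)) ∧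
  (∀ a, TensorProduct.map ω ω (δ₂ a) = δ₂ (ω a)) ∧
  (∀ a b, δ₂ (a * b) = lT2 β ω a (δ₂ b) + rT2 α ψ b (δ₂ a)) ∧
  -- Δ is a covariant BiHom-derivation with respect to (δ₁, δ₂)
  (∀ a b, Δ (a * b) = rT2 α ψ b (Δ a) + lT2 β ω a (δ₁ b)) ∧
  (∀ a b, Δ (a * b) = lT2 β ω a (Δ b) + rT2 α ψ b (δ₂ a))

/-- `r₁₃ = ω(r¹) ⊗ 1 ⊗ ψ(r²)` (unitary case, with unit `e`). -/
noncomputable def t13 {K A : Type*} [Field K] [NonUnitalNonAssocRing A] [Module K A]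
    [SMulCommClass K A A] [IsScalarTower K A A] (ψ ω : A →ₗ[K] A) (e : A) :
    A ⊗[K] A →ₗ[K] A ⊗[K] (A ⊗[K] A) :=
  TensorProduct.map ω (TensorProduct.mk K A A e ∘ₗ ψ)

section Aux

set_option linter.unusedSectionVars false

variable {K A : Type*} [Field K] [NonUnitalNonAssocRing A] [Module K A]
  [SMulCommClass K A A] [IsScalarTower K A A]

theorem lT2_tmul (β ω : A →ₗ[K] A) (a x y : A) :
    lT2 β ω a (x ⊗ₜ[K] y) = (ω a * x) ⊗ₜ[K] β y := rfl

theorem rT2_tmul (α ψ : A →ₗ[K] A) (a x y : A) :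
    rT2 α ψ a (x ⊗ₜ[K] y) = α x ⊗ₜ[K] (y * ψ a) := rfl

theorem lT3_tmul (β ω : A →ₗ[K] A) (a x : A) (y : A ⊗[K] A) :
    lT3 β ω a (x ⊗ₜ[K] y) = (ω a * x) ⊗ₜ[K] TensorProduct.map β β y := rfl

theorem rT3_tmul (α ψ : A →ₗ[K] A) (a x : A) (y : A ⊗[K] A) :
    rT3 α ψ a (x ⊗ₜ[K] y) = α x ⊗ₜ[K] rT2 α ψ a y := rfl

theorem deltaOp_apply (α β : A ≃ₗ[K] A) (ψ ω : A →ₗ[K] A) (r s : A ⊗[K] A) (a : A) :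
    deltaOp α β ψ ω r s a
      = lT2 β.toLinearMap ω (α.symm a) r - rT2 α.toLinearMap ψ (β.symm a) s := rfl

theorem m1223_tmul (α β : A →ₗ[K] A) (a b c d : A) :
    m1223 α β ((a ⊗ₜ[K] b) ⊗ₜ[K] (c ⊗ₜ[K] d)) = α a ⊗ₜ[K] ((b * c) ⊗ₜ[K] β d) := rfl

theorem m1312_tmul (α β ψ ω : A →ₗ[K] A) (a b c d : A) :
    m1312 α β ψ ω ((a ⊗ₜ[K] b) ⊗ₜ[K] (c ⊗ₜ[K] d))
      = (ω a * c) ⊗ₜ[K] (β d ⊗ₜ[K] α (ψ b)) := rfl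

theorem m2313_tmul (α β ψ ω : A →ₗ[K] A) (a b c d : A) :
    m2313 α β ψ ω ((a ⊗ₜ[K] b) ⊗ₜ[K] (c ⊗ₜ[K] d))
      = β (ω c) ⊗ₜ[K] (α a ⊗ₜ[K] (b * ψ d)) := rfl

theorem t13_tmul (ψ ω : A →ₗ[K] A) (e a b : A) :
    t13 ψ ω e (a ⊗ₜ[K] b) = ω a ⊗ₜ[K] (e ⊗ₜ[K] ψ b) := rfl

theorem tmap_sub_left {M N : Type*} [AddCommGroup M] [AddCommGroup N] [Module K M] [Module K N]
    (f g : A →ₗ[K] M) (h : A →ₗ[K] N) :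
    TensorProduct.map (f - g) h = TensorProduct.map f h - TensorProduct.map g h := by
  ext x y; simp [sub_tmul]

theorem tmap_sub_right {M N : Type*} [AddCommGroup M] [AddCommGroup N] [Module K M] [Module K N]
    (f g : A →ₗ[K] M) (h : A →ₗ[K] N) :
    TensorProduct.map h (f - g) = TensorProduct.map h f - TensorProduct.map h g := by
  ext x y; simp [tmul_sub]

/-- The left half of `deltaOp`. -/
noncomputable def dL (α β : A ≃ₗ[K] A) (ω : A →ₗ[K] A) : A ⊗[K] A →ₗ[K] A →ₗ[K] A ⊗[K] A :=
  LinearMap.lcomp K _ α.symm.toLinearMap ∘ₗ (lT2hom β.toLinearMap ω).flip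

/-- The right half of `deltaOp`. -/
noncomputable def dR (α β : A ≃ₗ[K] A) (ψ : A →ₗ[K] A) : A ⊗[K] A →ₗ[K] A →ₗ[K] A ⊗[K] A :=
  LinearMap.lcomp K _ β.symm.toLinearMap ∘ₗ (rT2hom α.toLinearMap ψ).flip

theorem dL_apply (α β : A ≃ₗ[K] A) (ω : A →ₗ[K] A) (u : A ⊗[K] A) (a : A) :
    dL α β ω u a = lT2 β.toLinearMap ω (α.symm a) u := rfl

theorem dR_apply (α β : A ≃ₗ[K] A) (ψ : A →ₗ[K] A) (u : A ⊗[K] A) (a : A) :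
    dR α β ψ u a = rT2 α.toLinearMap ψ (β.symm a) u := rfl

theorem deltaOp_eq (α β : A ≃ₗ[K] A) (ψ ω : A →ₗ[K] A) (r s : A ⊗[K] A) :
    deltaOp α β ψ ω r s = dL α β ω r - dR α β ψ s := rfl

theorem map_lT2 (F β ω : A →ₗ[K] A) (hm : ∀ a b, F (a * b) = F a * F b)
    (h1 : ∀ a, F (β a) = β (F a)) (h2 : ∀ a, F (ω a) = ω (F a)) (a : A) (u : A ⊗[K] A) :
    TensorProduct.map F F (lT2 β ω a u) = lT2 β ω (F a) (TensorProduct.map F F u) := by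
  induction u with
  | zero => simp
  | add u v hu hv => simp only [map_add, hu, hv]
  | tmul x y => simp [lT2_tmul, hm, h1, h2]

theorem map_rT2 (F α ψ : A →ₗ[K] A) (hm : ∀ a b, F (a * b) = F a * F b)
    (h1 : ∀ a, F (α a) = α (F a)) (h2 : ∀ a, F (ψ a) = ψ (F a)) (a : A) (u : A ⊗[K] A) :
    TensorProduct.map F F (rT2 α ψ a u) = rT2 α ψ (F a) (TensorProduct.map F F u) := by
  induction u with
  | zero => simp
  | add u v hu hv => simp only [map_add, hu, hv]
  | tmul x y => simp [rT2_tmul, hm, h1, h2]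

theorem symm_comm (α : A ≃ₗ[K] A) (F : A →ₗ[K] A) (h : ∀ a, α (F a) = F (α a)) (a : A) :
    α.symm (F a) = F (α.symm a) := by
  rw [LinearEquiv.symm_apply_eq, h, LinearEquiv.apply_symm_apply]

theorem symm_mul (α : A ≃ₗ[K] A) (h : ∀ a b, α (a * b) = α a * α b) (a b : A) :
    α.symm (a * b) = α.symm a * α.symm b := by
  rw [LinearEquiv.symm_apply_eq, h, LinearEquiv.apply_symm_apply, LinearEquiv.apply_symm_apply]

theorem map_deltaOp (α β : A ≃ₗ[K] A) (ψ ω F : A →ₗ[K] A) (r s : A ⊗[K] A)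
    (hm : ∀ a b, F (a * b) = F a * F b)
    (hα : ∀ a, α (F a) = F (α a)) (hβ : ∀ a, β (F a) = F (β a))
    (hψ : ∀ a, F (ψ a) = ψ (F a)) (hω : ∀ a, F (ω a) = ω (F a))
    (hr : TensorProduct.map F F r = r) (hs : TensorProduct.map F F s = s) (a : A) :
    TensorProduct.map F F (deltaOp α β ψ ω r s a) = deltaOp α β ψ ω r s (F a) := by
  rw [deltaOp_apply, deltaOp_apply, map_sub, map_lT2 F _ _ hm (fun a => (hβ a).symm) hω,
    map_rT2 F _ _ hm (fun a => (hα a).symm) hψ, hr, hs, symm_comm α F hα, symm_comm β F hβ]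

/-! Bimodule identities -/

theorem lT2_lT2 (α β : A ≃ₗ[K] A) (ω : A →ₗ[K] A)
    (hassoc : ∀ a b c, α a * (b * c) = (a * b) * β c)
    (hωmul : ∀ a b, ω (a * b) = ω a * ω b) (hαω : ∀ a, α (ω a) = ω (α a))
    (a b : A) (u : A ⊗[K] A) :
    lT2 β.toLinearMap ω (α a) (lT2 β.toLinearMap ω b u)
      = lT2 β.toLinearMap ω (a * b) (TensorProduct.map β.toLinearMap β.toLinearMap u) := by
  induction u with
  | zero => simp
  | add u v hu hv => simp only [map_add, hu, hv]
  | tmul x y => simp [lT2_tmul, hωmul, ← hαω, hassoc]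

theorem rT2_rT2 (α β : A ≃ₗ[K] A) (ψ : A →ₗ[K] A)
    (hassoc : ∀ a b c, α a * (b * c) = (a * b) * β c)
    (hψmul : ∀ a b, ψ (a * b) = ψ a * ψ b) (hβψ : ∀ a, β (ψ a) = ψ (β a))
    (a b : A) (u : A ⊗[K] A) :
    rT2 α.toLinearMap ψ (β b) (rT2 α.toLinearMap ψ a u)
      = rT2 α.toLinearMap ψ (a * b) (TensorProduct.map α.toLinearMap α.toLinearMap u) := by
  induction u with
  | zero => simp
  | add u v hu hv => simp only [map_add, hu, hv]
  | tmul x y => simp [rT2_tmul, hψmul, ← hβψ, hassoc]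

theorem lT2_rT2 (α β : A ≃ₗ[K] A) (ψ ω : A →ₗ[K] A)
    (hαmul : ∀ a b, α (a * b) = α a * α b)
    (hβmul : ∀ a b, β (a * b) = β a * β b)
    (hαω : ∀ a, α (ω a) = ω (α a)) (hβψ : ∀ a, β (ψ a) = ψ (β a))
    (a b : A) (u : A ⊗[K] A) :
    lT2 β.toLinearMap ω (α a) (rT2 α.toLinearMap ψ b u)
      = rT2 α.toLinearMap ψ (β b) (lT2 β.toLinearMap ω a u) := by
  induction u with
  | zero => simp
  | add u v hu hv => simp only [map_add, hu, hv]
  | tmul x y => simp [lT2_tmul, rT2_tmul, hαmul, hβmul, ← hαω, ← hβψ]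

/-- General covariance: `Δ_{r,s}(ab) = a ▷ Δ_{r,p}(b) + Δ_{p,s}(a) ◁ b`. -/
theorem deltaOp_mul (α β : A ≃ₗ[K] A) (ψ ω : A →ₗ[K] A) (r s p : A ⊗[K] A)
    (hαmul : ∀ a b, α (a * b) = α a * α b)
    (hβmul : ∀ a b, β (a * b) = β a * β b)
    (hassoc : ∀ a b c, α a * (b * c) = (a * b) * β c)
    (hψmul : ∀ a b, ψ (a * b) = ψ a * ψ b)
    (hωmul : ∀ a b, ω (a * b) = ω a * ω b)
    (hαω : ∀ a, α (ω a) = ω (α a)) (hβψ : ∀ a, β (ψ a) = ψ (β a))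
    (hr : TensorProduct.map β.toLinearMap β.toLinearMap r = r)
    (hs : TensorProduct.map α.toLinearMap α.toLinearMap s = s) (a b : A) :
    deltaOp α β ψ ω r s (a * b)
      = lT2 β.toLinearMap ω a (deltaOp α β ψ ω r p b)
        + rT2 α.toLinearMap ψ b (deltaOp α β ψ ω p s a) := by
  obtain ⟨a, rfl⟩ := α.surjective a
  obtain ⟨b, rfl⟩ := β.surjective b
  have h1 := lT2_lT2 α β ω hassoc hωmul hαω a (α.symm (β b)) r
  have h2 := rT2_rT2 α β ψ hassoc hψmul hβψ (β.symm (α a)) b s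
  have h3 := lT2_rT2 α β ψ ω hαmul hβmul hαω hβψ a b p
  rw [hr] at h1
  rw [hs] at h2
  simp only [deltaOp_apply, map_sub, symm_mul α hαmul, symm_mul β hβmul,
    LinearEquiv.symm_apply_apply] at *
  rw [h1, h2, h3]
  abel

/-! Expressions for `(ω⊗Δ)(u)` and `(Δ⊗ψ)(u)` -/

theorem map_dL (α β : A ≃ₗ[K] A) (ω : A →ₗ[K] A) (hαω : ∀ a, α (ω a) = ω (α a))
    (u t : A ⊗[K] A) :
    TensorProduct.map ω (dL α β ω t) (TensorProduct.map α.toLinearMap α.toLinearMap u)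
      = m1223 α.toLinearMap β.toLinearMap (TensorProduct.map ω ω u ⊗ₜ[K] t) := by
  induction u with
  | zero => simp
  | add u v hu hv => simp only [map_add, add_tmul, hu, hv]
  | tmul x y =>
    induction t with
    | zero => simp
    | add u v hu hv => simp only [map_add, TensorProduct.map_add_right, LinearMap.add_apply, tmul_add, hu, hv]
    | tmul z w => simp [dL_apply, lT2_tmul, m1223_tmul, hαω]

theorem map_dR (α β : A ≃ₗ[K] A) (ψ ω : A →ₗ[K] A) (hβω : ∀ a, β (ω a) = ω (β a))
    (u t : A ⊗[K] A) :
    TensorProduct.map ω (dR α β ψ t) (TensorProduct.map β.toLinearMap β.toLinearMap u)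
      = m2313 α.toLinearMap β.toLinearMap ψ ω (t ⊗ₜ[K] u) := by
  induction u with
  | zero => simp
  | add u v hu hv => simp only [map_add, tmul_add, hu, hv]
  | tmul x y =>
    induction t with
    | zero => simp
    | add u v hu hv => simp only [map_add, TensorProduct.map_add_right, LinearMap.add_apply, add_tmul, hu, hv]
    | tmul z w => simp [dR_apply, rT2_tmul, m2313_tmul, hβω]

theorem dL_map (α β : A ≃ₗ[K] A) (ψ ω : A →ₗ[K] A) (hαψ : ∀ a, α (ψ a) = ψ (α a))
    (u t : A ⊗[K] A) :
    TensorProduct.assoc K A A A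
      (TensorProduct.map (dL α β ω t) ψ (TensorProduct.map α.toLinearMap α.toLinearMap u))
      = m1312 α.toLinearMap β.toLinearMap ψ ω (u ⊗ₜ[K] t) := by
  induction u with
  | zero => simp
  | add u v hu hv => simp only [map_add, add_tmul, hu, hv]
  | tmul x y =>
    induction t with
    | zero => simp
    | add u v hu hv => simp only [map_add, TensorProduct.map_add_left, LinearMap.add_apply, tmul_add, hu, hv]
    | tmul z w => simp [dL_apply, lT2_tmul, m1312_tmul, hαψ]

theorem dR_map (α β : A ≃ₗ[K] A) (ψ : A →ₗ[K] A) (hβψ : ∀ a, β (ψ a) = ψ (β a))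
    (u t : A ⊗[K] A) :
    TensorProduct.assoc K A A A
      (TensorProduct.map (dR α β ψ t) ψ (TensorProduct.map β.toLinearMap β.toLinearMap u))
      = m1223 α.toLinearMap β.toLinearMap (t ⊗ₜ[K] TensorProduct.map ψ ψ u) := by
  induction u with
  | zero => simp
  | add u v hu hv => simp only [map_add, tmul_add, hu, hv]
  | tmul x y =>
    induction t with
    | zero => simp
    | add u v hu hv => simp only [map_add, TensorProduct.map_add_left, LinearMap.add_apply, add_tmul, hu, hv]
    | tmul z w => simp [dR_apply, rT2_tmul, m1223_tmul, hβψ]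

/-! Pieces of coassociativity -/

theorem coC1 (α β : A ≃ₗ[K] A) (ψ ω : A →ₗ[K] A) (Δ δ : A →ₗ[K] A ⊗[K] A)
    (hβψ : ∀ a, β (ψ a) = ψ (β a))
    (hΔ : ∀ a b, Δ (a * b) = lT2 β.toLinearMap ω a (Δ b) + rT2 α.toLinearMap ψ b (δ a))
    (x : A) (u : A ⊗[K] A) :
    TensorProduct.assoc K A A A (TensorProduct.map Δ ψ (lT2 β.toLinearMap ω x u))
      = lT3 β.toLinearMap ω (ω x) (TensorProduct.assoc K A A A (TensorProduct.map Δ ψ u))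
        + m1223 α.toLinearMap β.toLinearMap (δ (ω x) ⊗ₜ[K] TensorProduct.map ψ ψ u) := by
  induction u with
  | zero => simp
  | add u v hu hv => simp only [map_add, tmul_add, hu, hv]; abel
  | tmul y z =>
    simp only [lT2_tmul, TensorProduct.map_tmul, hΔ, add_tmul, map_add]
    congr 1
    · induction Δ y with
      | zero => simp
      | add u v hu hv => simp only [map_add, add_tmul, hu, hv]
      | tmul a b => simp [lT2_tmul, lT3_tmul, hβψ]
    · induction δ (ω x) with
      | zero => simp
      | add u v hu hv => simp only [map_add, add_tmul, hu, hv]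
      | tmul a b => simp [rT2_tmul, m1223_tmul, hβψ]

theorem coC2 (β : A ≃ₗ[K] A) (ω : A →ₗ[K] A) (Δ : A →ₗ[K] A ⊗[K] A)
    (hωmul : ∀ a b, ω (a * b) = ω a * ω b)
    (hΔ : ∀ a, TensorProduct.map β.toLinearMap β.toLinearMap (Δ a) = Δ (β a))
    (x : A) (u : A ⊗[K] A) :
    TensorProduct.map ω Δ (lT2 β.toLinearMap ω x u)
      = lT3 β.toLinearMap ω (ω x) (TensorProduct.map ω Δ u) := by
  induction u with
  | zero => simp
  | add u v hu hv => simp only [map_add, hu, hv]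
  | tmul y z => simp [lT2_tmul, lT3_tmul, hωmul, hΔ]

theorem coC3 (α : A ≃ₗ[K] A) (ψ : A →ₗ[K] A) (Δ : A →ₗ[K] A ⊗[K] A)
    (hψmul : ∀ a b, ψ (a * b) = ψ a * ψ b)
    (hΔ : ∀ a, TensorProduct.map α.toLinearMap α.toLinearMap (Δ a) = Δ (α a))
    (x : A) (u : A ⊗[K] A) :
    TensorProduct.assoc K A A A (TensorProduct.map Δ ψ (rT2 α.toLinearMap ψ x u))
      = rT3 α.toLinearMap ψ (ψ x) (TensorProduct.assoc K A A A (TensorProduct.map Δ ψ u)) := by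
  induction u with
  | zero => simp
  | add u v hu hv => simp only [map_add, hu, hv]
  | tmul y z =>
    simp only [rT2_tmul, TensorProduct.map_tmul, hψmul, LinearEquiv.coe_coe, ← hΔ]
    induction Δ y with
    | zero => simp
    | add u v hu hv => simp only [map_add, add_tmul, hu, hv]
    | tmul a b => simp [rT2_tmul, rT3_tmul]

theorem coC4 (α β : A ≃ₗ[K] A) (ψ ω : A →ₗ[K] A) (Δ δ : A →ₗ[K] A ⊗[K] A)
    (hαω : ∀ a, α (ω a) = ω (α a))
    (hΔ : ∀ a b, Δ (a * b) = rT2 α.toLinearMap ψ b (Δ a) + lT2 β.toLinearMap ω a (δ b))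
    (x : A) (u : A ⊗[K] A) :
    TensorProduct.map ω Δ (rT2 α.toLinearMap ψ x u)
      = rT3 α.toLinearMap ψ (ψ x) (TensorProduct.map ω Δ u)
        + m1223 α.toLinearMap β.toLinearMap (TensorProduct.map ω ω u ⊗ₜ[K] δ (ψ x)) := by
  induction u with
  | zero => simp
  | add u v hu hv => simp only [map_add, add_tmul, hu, hv]; abel
  | tmul y z =>
    simp only [rT2_tmul, TensorProduct.map_tmul, hΔ, tmul_add]
    congr 1
    · simp [rT3_tmul, hαω]
    · induction δ (ψ x) with
      | zero => simp
      | add u v hu hv => simp only [map_add, tmul_add, hu, hv]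
      | tmul a b => simp [lT2_tmul, m1223_tmul, hαω]

theorem coM1 (α β : A ≃ₗ[K] A) (ω : A →ₗ[K] A)
    (hαmul : ∀ a b, α (a * b) = α a * α b)
    (hβmul : ∀ a b, β (a * b) = β a * β b)
    (hαω : ∀ a, α (ω a) = ω (α a)) (x : A) (u t : A ⊗[K] A) :
    m1223 α.toLinearMap β.toLinearMap (lT2 β.toLinearMap ω (α.symm x) u ⊗ₜ[K]
        TensorProduct.map β.toLinearMap β.toLinearMap t)
      = lT3 β.toLinearMap ω x (m1223 α.toLinearMap β.toLinearMap (u ⊗ₜ[K] t)) := by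
  induction u with
  | zero => simp
  | add u v hu hv => simp only [map_add, add_tmul, hu, hv]
  | tmul y z =>
    induction t with
    | zero => simp
    | add u v hu hv => simp only [map_add, tmul_add, hu, hv]
    | tmul z w => simp [lT2_tmul, lT3_tmul, m1223_tmul, hαmul, hβmul, hαω]

theorem coM2 (α β : A ≃ₗ[K] A) (ψ : A →ₗ[K] A)
    (hαmul : ∀ a b, α (a * b) = α a * α b)
    (hβmul : ∀ a b, β (a * b) = β a * β b)
    (hβψ : ∀ a, β (ψ a) = ψ (β a)) (x : A) (u t : A ⊗[K] A) :
    m1223 α.toLinearMap β.toLinearMap (TensorProduct.map α.toLinearMap α.toLinearMap u ⊗ₜ[K]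
        rT2 α.toLinearMap ψ (β.symm x) t)
      = rT3 α.toLinearMap ψ x (m1223 α.toLinearMap β.toLinearMap (u ⊗ₜ[K] t)) := by
  induction u with
  | zero => simp
  | add u v hu hv => simp only [map_add, add_tmul, hu, hv]
  | tmul y z =>
    induction t with
    | zero => simp
    | add u v hu hv => simp only [map_add, tmul_add, hu, hv]
    | tmul z w => simp [rT2_tmul, rT3_tmul, m1223_tmul, hαmul, hβmul, hβψ]

theorem coM3 (α β : A ≃ₗ[K] A) (ψ ω : A →ₗ[K] A)
    (hassoc : ∀ a b c, α a * (b * c) = (a * b) * β c)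
    (x x2 : A) (hx : ω x2 = ψ x) (u t : A ⊗[K] A) :
    m1223 α.toLinearMap β.toLinearMap (rT2 α.toLinearMap ψ x u ⊗ₜ[K]
        TensorProduct.map β.toLinearMap β.toLinearMap t)
      = m1223 α.toLinearMap β.toLinearMap (TensorProduct.map α.toLinearMap α.toLinearMap u ⊗ₜ[K]
        lT2 β.toLinearMap ω x2 t) := by
  induction u with
  | zero => simp
  | add u v hu hv => simp only [map_add, add_tmul, hu, hv]
  | tmul y z =>
    induction t with
    | zero => simp
    | add u v hu hv => simp only [map_add, tmul_add, hu, hv]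
    | tmul z w => simp [rT2_tmul, lT2_tmul, m1223_tmul, hassoc, hx]

/-! Evaluations at the unit -/

theorem m2313_e_left (α β : A ≃ₗ[K] A) (ψ ω : A →ₗ[K] A) (e : A) (hαe : α e = e)
    (hel : ∀ a, e * a = β a) (hβψ : ∀ a, β (ψ a) = ψ (β a)) (hβω : ∀ a, β (ω a) = ω (β a))
    (u : A ⊗[K] A) :
    m2313 α.toLinearMap β.toLinearMap ψ ω ((e ⊗ₜ[K] e) ⊗ₜ[K] u)
      = t13 ψ ω e (TensorProduct.map β.toLinearMap β.toLinearMap u) := by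
  induction u with
  | zero => simp
  | add u v hu hv => simp only [map_add, tmul_add, hu, hv]
  | tmul y z => simp [m2313_tmul, t13_tmul, hαe, hel, hβψ, hβω]

theorem m2313_e_right (α β : A ≃ₗ[K] A) (ψ ω : A →ₗ[K] A) (e : A) (hβe : β e = e)
    (hψe : ψ e = e) (hωe : ω e = e) (her : ∀ a, a * e = α a) (u : A ⊗[K] A) :
    m2313 α.toLinearMap β.toLinearMap ψ ω (u ⊗ₜ[K] (e ⊗ₜ[K] e))
      = e ⊗ₜ[K] (TensorProduct.map α.toLinearMap α.toLinearMap u) := by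
  induction u with
  | zero => simp
  | add u v hu hv => simp only [map_add, tmul_add, add_tmul, hu, hv]
  | tmul y z => simp [m2313_tmul, hβe, hψe, hωe, her]

theorem m1223_e_left (α β : A ≃ₗ[K] A) (e : A) (hαe : α e = e)
    (hel : ∀ a, e * a = β a) (u : A ⊗[K] A) :
    m1223 α.toLinearMap β.toLinearMap ((e ⊗ₜ[K] e) ⊗ₜ[K] u)
      = e ⊗ₜ[K] (TensorProduct.map β.toLinearMap β.toLinearMap u) := by
  induction u with
  | zero => simp
  | add u v hu hv => simp only [map_add, tmul_add, hu, hv]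
  | tmul y z => simp [m1223_tmul, hαe, hel]

theorem m1223_e_right (α β : A ≃ₗ[K] A) (e : A) (hβe : β e = e)
    (her : ∀ a, a * e = α a) (u : A ⊗[K] A) :
    m1223 α.toLinearMap β.toLinearMap (u ⊗ₜ[K] (e ⊗ₜ[K] e))
      = TensorProduct.assoc K A A A
        ((TensorProduct.map α.toLinearMap α.toLinearMap u) ⊗ₜ[K] e) := by
  induction u with
  | zero => simp
  | add u v hu hv => simp only [map_add, add_tmul, hu, hv]
  | tmul y z => simp [m1223_tmul, hβe, her]

theorem m1312_e_left (α β : A ≃ₗ[K] A) (ψ ω : A →ₗ[K] A) (e : A) (hαe : α e = e)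
    (hψe : ψ e = e) (hωe : ω e = e) (hel : ∀ a, e * a = β a) (u : A ⊗[K] A) :
    m1312 α.toLinearMap β.toLinearMap ψ ω ((e ⊗ₜ[K] e) ⊗ₜ[K] u)
      = TensorProduct.assoc K A A A
        ((TensorProduct.map β.toLinearMap β.toLinearMap u) ⊗ₜ[K] e) := by
  induction u with
  | zero => simp
  | add u v hu hv => simp only [map_add, tmul_add, add_tmul, hu, hv]
  | tmul y z => simp [m1312_tmul, hαe, hψe, hωe, hel]

/-- Coassociativity of `Δ` for a weight `(0,0)` pair. -/
theorem coassoc_of_pair (α β : A ≃ₗ[K] A) (ψ ω : A →ₗ[K] A) (r s : A ⊗[K] A)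
    (hαmul : ∀ a b, α (a * b) = α a * α b)
    (hβmul : ∀ a b, β (a * b) = β a * β b)
    (hassoc : ∀ a b c, α a * (b * c) = (a * b) * β c)
    (hψmul : ∀ a b, ψ (a * b) = ψ a * ψ b)
    (hωmul : ∀ a b, ω (a * b) = ω a * ω b)
    (hαβ : ∀ a, α (β a) = β (α a)) (hαψ : ∀ a, α (ψ a) = ψ (α a))
    (hαω : ∀ a, α (ω a) = ω (α a)) (hβψ : ∀ a, β (ψ a) = ψ (β a))
    (hβω : ∀ a, β (ω a) = ω (β a)) (hψω : ∀ a, ψ (ω a) = ω (ψ a))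
    (hrα : TensorProduct.map α.toLinearMap α.toLinearMap r = r)
    (hrβ : TensorProduct.map β.toLinearMap β.toLinearMap r = r)
    (hrψ : TensorProduct.map ψ ψ r = r)
    (hrω : TensorProduct.map ω ω r = r)
    (hsα : TensorProduct.map α.toLinearMap α.toLinearMap s = s)
    (hsβ : TensorProduct.map β.toLinearMap β.toLinearMap s = s)
    (hsψ : TensorProduct.map ψ ψ s = s)
    (hsω : TensorProduct.map ω ω s = s)
    (h1 : m1312 α.toLinearMap β.toLinearMap ψ ω (r ⊗ₜ[K] r)
         - m1223 α.toLinearMap β.toLinearMap (r ⊗ₜ[K] r)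
         + m2313 α.toLinearMap β.toLinearMap ψ ω (s ⊗ₜ[K] r) = 0)
    (h2 : m1312 α.toLinearMap β.toLinearMap ψ ω (s ⊗ₜ[K] r)
         - m1223 α.toLinearMap β.toLinearMap (s ⊗ₜ[K] s)
         + m2313 α.toLinearMap β.toLinearMap ψ ω (s ⊗ₜ[K] s) = 0) (a : A) :
    TensorProduct.assoc K A A A
        (TensorProduct.map (deltaOp α β ψ ω r s) ψ (deltaOp α β ψ ω r s a)) =
      TensorProduct.map ω (deltaOp α β ψ ω r s) (deltaOp α β ψ ω r s a) := by
  have e1 : ∀ u : A ⊗[K] A, TensorProduct.map α.toLinearMap α.toLinearMap u = u →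
      TensorProduct.map β.toLinearMap β.toLinearMap u = u → TensorProduct.map ψ ψ u = u →
      TensorProduct.assoc K A A A (TensorProduct.map (deltaOp α β ψ ω r s) ψ u)
        = m1312 α.toLinearMap β.toLinearMap ψ ω (u ⊗ₜ[K] r)
          - m1223 α.toLinearMap β.toLinearMap (s ⊗ₜ[K] u) := by
    intro u ha hb hp
    have k1 := dL_map α β ψ ω hαψ u r
    have k2 := dR_map α β ψ hβψ u s
    rw [ha] at k1
    rw [hb, hp] at k2
    rw [deltaOp_eq, tmap_sub_left, LinearMap.sub_apply, map_sub, k1, k2]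
  have e2 : ∀ u : A ⊗[K] A, TensorProduct.map α.toLinearMap α.toLinearMap u = u →
      TensorProduct.map β.toLinearMap β.toLinearMap u = u → TensorProduct.map ω ω u = u →
      TensorProduct.map ω (deltaOp α β ψ ω r s) u
        = m1223 α.toLinearMap β.toLinearMap (u ⊗ₜ[K] r)
          - m2313 α.toLinearMap β.toLinearMap ψ ω (s ⊗ₜ[K] u) := by
    intro u ha hb hp
    have k1 := map_dL α β ω hαω u r
    have k2 := map_dR α β ψ ω hβω u s
    rw [ha, hp] at k1
    rw [hb] at k2
    rw [deltaOp_eq, tmap_sub_right, LinearMap.sub_apply, k1, k2]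
  have dα := map_deltaOp α β ψ ω α.toLinearMap r s hαmul (fun _ => rfl)
    (fun a => (hαβ a).symm) hαψ hαω hrα hsα
  have dβ := map_deltaOp α β ψ ω β.toLinearMap r s hβmul hαβ
    (fun _ => rfl) hβψ hβω hrβ hsβ
  have dm1 := deltaOp_mul α β ψ ω r s r hαmul hβmul hassoc hψmul hωmul hαω hβψ hrβ hsα
  have dm2 := deltaOp_mul α β ψ ω r s s hαmul hβmul hassoc hψmul hωmul hαω hβψ hrβ hsα
  have c1 := coC1 α β ψ ω (deltaOp α β ψ ω r s) (deltaOp α β ψ ω s s) hβψ dm2 (α.symm a) r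
  have c2 := coC2 β ω (deltaOp α β ψ ω r s) hωmul dβ (α.symm a) r
  have c3 := coC3 α ψ (deltaOp α β ψ ω r s) hψmul dα (β.symm a) s
  have c4 := coC4 α β ψ ω (deltaOp α β ψ ω r s) (deltaOp α β ψ ω r r) hαω
    (fun a b => by rw [dm1, add_comm]) (β.symm a) s
  have f1 := e1 r hrα hrβ hrψ
  have f2 := e2 r hrα hrβ hrω
  have f3 := e1 s hsα hsβ hsψ
  have f4 := e2 s hsα hsβ hsω
  have g1 : TensorProduct.assoc K A A A (TensorProduct.map (deltaOp α β ψ ω r s) ψ r)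
      = TensorProduct.map ω (deltaOp α β ψ ω r s) r
        - m1223 α.toLinearMap β.toLinearMap (s ⊗ₜ[K] r) := by
    rw [f1, f2, ← sub_eq_zero, ← h1]; abel
  have g2 : TensorProduct.assoc K A A A (TensorProduct.map (deltaOp α β ψ ω r s) ψ s)
      = TensorProduct.map ω (deltaOp α β ψ ω r s) s
        - m1223 α.toLinearMap β.toLinearMap (s ⊗ₜ[K] r) := by
    rw [f3, f4, ← sub_eq_zero, ← h2]; abel
  have k1 := coM1 α β ω hαmul hβmul hαω (ω (α.symm a)) s r
  have k2 := coM2 α β ψ hαmul hβmul hβψ (ψ (β.symm a)) s r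
  have k3 := coM3 α β ψ ω hassoc (β.symm (ω (α.symm a))) (α.symm (ψ (β.symm a)))
    (by
      rw [symm_comm α ψ hαψ, symm_comm β ω hβω, hψω]
      congr 2
      rw [LinearEquiv.symm_apply_eq, LinearEquiv.symm_apply_eq, ← hαβ]
      simp) s r
  rw [hrβ] at k1 k3
  rw [hsα] at k2 k3
  rw [deltaOp_apply α β ψ ω r s a]
  simp only [map_sub]
  rw [c1, c2, c3, c4, g1, g2, hrψ, hsω, deltaOp_apply, deltaOp_apply, sub_tmul, tmul_sub]
  simp only [map_sub]
  rw [k1, k2, k3]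
  abel

end Aux

/-- Proposition 2.28 / Proposition 2.17 of the paper: with the
data of Statement 11, `A` unitary with `ψ(1) = ω(1) = 1`, and `s = r − 1⊗1`, the
tuple `(A, μ, δ_r, δ_s, Δ, α, β, ψ, ω)` is a unitary quasitriangular covariant
BiHom-bialgebra iff `ω(r¹)⊗1⊗ψ(r²) = r₁₃r₁₂ − r₁₂r₂₃ + r₂₃r₁₃` (the abhYBe of
weight `−1`); equivalently, iff `(ω⊗Δ)(r) = r₁₃r₁₂` and
`(Δ⊗ψ)(r) = −r₂₃r₁₃ + 1⊗r¹⊗r² + ω(r¹)⊗1⊗ψ(r²)`. -/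
theorem stmt14 {K A : Type*} [Field K] [NonUnitalNonAssocRing A] [Module K A]
    [SMulCommClass K A A] [IsScalarTower K A A]
    (α β : A ≃ₗ[K] A) (ψ ω : A →ₗ[K] A) (e : A) (r s : A ⊗[K] A)
    (hs : s = r - e ⊗ₜ[K] e)
    -- BiHom-associative algebra axioms for (A, ·, α, β)
    (hαmul : ∀ a b, α (a * b) = α a * α b)
    (hβmul : ∀ a b, β (a * b) = β a * β b)
    (hassoc : ∀ a b c, α a * (b * c) = (a * b) * β c)
    -- unit axioms, and ψ, ω fix the unit
    (hαe : α e = e) (hβe : β e = e) (hψe : ψ e = e) (hωe : ω e = e)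
    (her : ∀ a, a * e = α a) (hel : ∀ a, e * a = β a)
    -- ψ, ω multiplicative
    (hψmul : ∀ a b, ψ (a * b) = ψ a * ψ b)
    (hωmul : ∀ a b, ω (a * b) = ω a * ω b)
    -- α, β, ψ, ω pairwise commute
    (hαβ : ∀ a, α (β a) = β (α a)) (hαψ : ∀ a, α (ψ a) = ψ (α a))
    (hαω : ∀ a, α (ω a) = ω (α a)) (hβψ : ∀ a, β (ψ a) = ψ (β a))
    (hβω : ∀ a, β (ω a) = ω (β a)) (hψω : ∀ a, ψ (ω a) = ω (ψ a))
    -- r is α-, β-, ψ-, ω-invariant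
    (hrα : TensorProduct.map α.toLinearMap α.toLinearMap r = r)
    (hrβ : TensorProduct.map β.toLinearMap β.toLinearMap r = r)
    (hrψ : TensorProduct.map ψ ψ r = r)
    (hrω : TensorProduct.map ω ω r = r) :
    -- P: (A, μ, δ_r, δ_s, Δ, α, β, ψ, ω) is a unitary quasitriangular covariant
    -- BiHom-bialgebra, i.e. (r, s) is an abhYBp of weight (0, 0) and Δ(1) = 1⊗1
    (((m1312 α.toLinearMap β.toLinearMap ψ ω (r ⊗ₜ[K] r)
         - m1223 α.toLinearMap β.toLinearMap (r ⊗ₜ[K] r)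
         + m2313 α.toLinearMap β.toLinearMap ψ ω (s ⊗ₜ[K] r) = 0) ∧
      (m1312 α.toLinearMap β.toLinearMap ψ ω (s ⊗ₜ[K] r)
         - m1223 α.toLinearMap β.toLinearMap (s ⊗ₜ[K] s)
         + m2313 α.toLinearMap β.toLinearMap ψ ω (s ⊗ₜ[K] s) = 0) ∧
      IsCovariantBiHomBialgebra α.toLinearMap β.toLinearMap ψ ω
        (deltaOp α β ψ ω r r) (deltaOp α β ψ ω s s) (deltaOp α β ψ ω r s) ∧
      deltaOp α β ψ ω r s e = e ⊗ₜ[K] e)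
    ↔
    -- Q: ω(r¹)⊗1⊗ψ(r²) = r₁₃r₁₂ − r₁₂r₂₃ + r₂₃r₁₃, the abhYBe of weight −1
    (t13 ψ ω e r =
      m1312 α.toLinearMap β.toLinearMap ψ ω (r ⊗ₜ[K] r)
        - m1223 α.toLinearMap β.toLinearMap (r ⊗ₜ[K] r)
        + m2313 α.toLinearMap β.toLinearMap ψ ω (r ⊗ₜ[K] r)))
    ∧
    -- P ↔ R: (ω⊗Δ)(r) = r₁₃r₁₂ and
    -- (Δ⊗ψ)(r) = −r₂₃r₁₃ + 1⊗r¹⊗r² + ω(r¹)⊗1⊗ψ(r²)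
    (((m1312 α.toLinearMap β.toLinearMap ψ ω (r ⊗ₜ[K] r)
         - m1223 α.toLinearMap β.toLinearMap (r ⊗ₜ[K] r)
         + m2313 α.toLinearMap β.toLinearMap ψ ω (s ⊗ₜ[K] r) = 0) ∧
      (m1312 α.toLinearMap β.toLinearMap ψ ω (s ⊗ₜ[K] r)
         - m1223 α.toLinearMap β.toLinearMap (s ⊗ₜ[K] s)
         + m2313 α.toLinearMap β.toLinearMap ψ ω (s ⊗ₜ[K] s) = 0) ∧
      IsCovariantBiHomBialgebra α.toLinearMap β.toLinearMap ψ ω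
        (deltaOp α β ψ ω r r) (deltaOp α β ψ ω s s) (deltaOp α β ψ ω r s) ∧
      deltaOp α β ψ ω r s e = e ⊗ₜ[K] e)
    ↔
    ((TensorProduct.map ω (deltaOp α β ψ ω r s) r =
        m1312 α.toLinearMap β.toLinearMap ψ ω (r ⊗ₜ[K] r)) ∧
     (TensorProduct.assoc K A A A (TensorProduct.map (deltaOp α β ψ ω r s) ψ r) =
        - m2313 α.toLinearMap β.toLinearMap ψ ω (r ⊗ₜ[K] r)
          + e ⊗ₜ[K] r + t13 ψ ω e r))) := by
  have hee : ∀ F : A →ₗ[K] A, F e = e → TensorProduct.map F F r = r →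
      TensorProduct.map F F s = s := by
    intro F hF hr
    rw [hs, map_sub, hr, TensorProduct.map_tmul, hF]
  have hsα := hee α.toLinearMap hαe hrα
  have hsβ := hee β.toLinearMap hβe hrβ
  have hsψ := hee ψ hψe hrψ
  have hsω := hee ω hωe hrω
  have n1 := m2313_e_left α β ψ ω e hαe hel hβψ hβω r
  have n2 := m2313_e_right α β ψ ω e hβe hψe hωe her s
  have n3 := m1223_e_left α β e hαe hel
  have n4 := m1223_e_right α β e hβe her r
  have n5 := m1312_e_left α β ψ ω e hαe hψe hωe hel r
  rw [hrβ] at n1 n5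
  rw [hsα] at n2
  rw [hrα] at n4
  have n3r := n3 r
  rw [hrβ] at n3r
  have n3s := n3 s
  rw [hsβ] at n3s
  have q1 : m2313 α.toLinearMap β.toLinearMap ψ ω (s ⊗ₜ[K] r)
      = m2313 α.toLinearMap β.toLinearMap ψ ω (r ⊗ₜ[K] r) - t13 ψ ω e r := by
    rw [← n1, ← map_sub, ← sub_tmul, ← hs]
  have q2 : m2313 α.toLinearMap β.toLinearMap ψ ω (s ⊗ₜ[K] s)
      = m2313 α.toLinearMap β.toLinearMap ψ ω (s ⊗ₜ[K] r) - e ⊗ₜ[K] s := by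
    rw [← n2, ← map_sub, ← tmul_sub, ← hs]
  have q3 : m1312 α.toLinearMap β.toLinearMap ψ ω (s ⊗ₜ[K] r)
      = m1312 α.toLinearMap β.toLinearMap ψ ω (r ⊗ₜ[K] r)
        - TensorProduct.assoc K A A A (r ⊗ₜ[K] e) := by
    rw [← n5, ← map_sub, ← sub_tmul, ← hs]
  have q4 : m1223 α.toLinearMap β.toLinearMap (s ⊗ₜ[K] s)
      = m1223 α.toLinearMap β.toLinearMap (r ⊗ₜ[K] r)
        - TensorProduct.assoc K A A A (r ⊗ₜ[K] e) - e ⊗ₜ[K] s := by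
    rw [← n4, ← n3s, ← map_sub, ← tmul_sub, ← hs, ← map_sub, ← sub_tmul, ← hs]
  have q5 : m1223 α.toLinearMap β.toLinearMap (s ⊗ₜ[K] r)
      = m1223 α.toLinearMap β.toLinearMap (r ⊗ₜ[K] r) - e ⊗ₜ[K] r := by
    rw [← n3r, ← map_sub, ← sub_tmul, ← hs]
  have w1 : TensorProduct.map ω (deltaOp α β ψ ω r s) r
      = m1223 α.toLinearMap β.toLinearMap (r ⊗ₜ[K] r)
        - m2313 α.toLinearMap β.toLinearMap ψ ω (s ⊗ₜ[K] r) := by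
    have k1 := map_dL α β ω hαω r r
    have k2 := map_dR α β ψ ω hβω r s
    rw [hrα, hrω] at k1
    rw [hrβ] at k2
    rw [deltaOp_eq, tmap_sub_right, LinearMap.sub_apply, k1, k2]
  have w2 : TensorProduct.assoc K A A A (TensorProduct.map (deltaOp α β ψ ω r s) ψ r)
      = m1312 α.toLinearMap β.toLinearMap ψ ω (r ⊗ₜ[K] r)
        - m1223 α.toLinearMap β.toLinearMap (s ⊗ₜ[K] r) := by
    have k1 := dL_map α β ψ ω hαψ r r
    have k2 := dR_map α β ψ hβψ r s
    rw [hrα] at k1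
    rw [hrβ, hrψ] at k2
    rw [deltaOp_eq, tmap_sub_left, LinearMap.sub_apply, map_sub, k1, k2]
  have hQ : (m1312 α.toLinearMap β.toLinearMap ψ ω (r ⊗ₜ[K] r)
         - m1223 α.toLinearMap β.toLinearMap (r ⊗ₜ[K] r)
         + m2313 α.toLinearMap β.toLinearMap ψ ω (s ⊗ₜ[K] r) = 0) ↔
      (t13 ψ ω e r =
      m1312 α.toLinearMap β.toLinearMap ψ ω (r ⊗ₜ[K] r)
        - m1223 α.toLinearMap β.toLinearMap (r ⊗ₜ[K] r)
        + m2313 α.toLinearMap β.toLinearMap ψ ω (r ⊗ₜ[K] r)) := by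
    rw [q1, ← add_sub_assoc, sub_eq_zero, eq_comm]
  have key : ∀ X Y : Prop, (X → Y) → ∀ Q, (X ↔ Q) → ((X ∧ Y) ↔ Q) := by
    intro X Y h Q hq
    rw [← hq]; exact ⟨fun h => h.1, fun hq2 => ⟨hq2, h hq2⟩⟩
  have full : (m1312 α.toLinearMap β.toLinearMap ψ ω (r ⊗ₜ[K] r)
         - m1223 α.toLinearMap β.toLinearMap (r ⊗ₜ[K] r)
         + m2313 α.toLinearMap β.toLinearMap ψ ω (s ⊗ₜ[K] r) = 0) →
      (m1312 α.toLinearMap β.toLinearMap ψ ω (s ⊗ₜ[K] r)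
         - m1223 α.toLinearMap β.toLinearMap (s ⊗ₜ[K] s)
         + m2313 α.toLinearMap β.toLinearMap ψ ω (s ⊗ₜ[K] s) = 0) ∧
      IsCovariantBiHomBialgebra α.toLinearMap β.toLinearMap ψ ω
        (deltaOp α β ψ ω r r) (deltaOp α β ψ ω s s) (deltaOp α β ψ ω r s) ∧
      deltaOp α β ψ ω r s e = e ⊗ₜ[K] e := by
    intro h1
    have h2 : m1312 α.toLinearMap β.toLinearMap ψ ω (s ⊗ₜ[K] r)
         - m1223 α.toLinearMap β.toLinearMap (s ⊗ₜ[K] s)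
         + m2313 α.toLinearMap β.toLinearMap ψ ω (s ⊗ₜ[K] s) = 0 := by
      rw [q2, q3, q4, ← h1]; abel
    have mα := fun p q => map_deltaOp α β ψ ω α.toLinearMap p q hαmul (fun _ => rfl)
      (fun a => (hαβ a).symm) hαψ hαω
    have mβ := fun p q => map_deltaOp α β ψ ω β.toLinearMap p q hβmul hαβ
      (fun _ => rfl) hβψ hβω
    have mψ := fun p q => map_deltaOp α β ψ ω ψ p q hψmul hαψ hβψ (fun _ => rfl) hψω
    have mω := fun p q => map_deltaOp α β ψ ω ω p q hωmul hαω hβω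
      (fun a => (hψω a).symm) (fun _ => rfl)
    have mm := fun p q t => deltaOp_mul α β ψ ω p q t hαmul hβmul hassoc hψmul hωmul hαω hβψ
    refine ⟨h2, ⟨mψ r s hrψ hsψ, mω r s hrω hsω, mα r s hrα hsα, mβ r s hrβ hsβ,
      coassoc_of_pair α β ψ ω r s hαmul hβmul hassoc hψmul hωmul hαβ hαψ hαω hβψ hβω hψω
        hrα hrβ hrψ hrω hsα hsβ hsψ hsω h1 h2,
      mα r r hrα hrα, mβ r r hrβ hrβ, mψ r r hrψ hrψ, mω r r hrω hrω, mm r r r hrβ hrα,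
      mα s s hsα hsα, mβ s s hsβ hsβ, mψ s s hsψ hsψ, mω s s hsω hsω, mm s s s hsβ hsα,
      fun a b => by rw [mm r s r hrβ hsα, add_comm], mm r s s hrβ hsα⟩, ?_⟩
    have ae : α.symm e = e := by rw [LinearEquiv.symm_apply_eq, hαe]
    have be : β.symm e = e := by rw [LinearEquiv.symm_apply_eq, hβe]
    have l1 : LinearMap.mulLeft K (ω e) = β.toLinearMap := by
      ext x; simp [hωe, hel]
    have l2 : LinearMap.mulRight K (ψ e) = α.toLinearMap := by
      ext x; simp [hψe, her]
    rw [deltaOp_apply, ae, be, lT2, rT2, l1, l2, hrβ, hsα, hs]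
    abel
  constructor
  · refine key _ _ ?_ _ hQ
    intro h1
    exact full h1
  · refine key _ _ ?_ _ ?_
    · intro h1
      exact full h1
    · rw [w1, w2, q5]
      constructor
      · intro h
        have hq2 := hQ.1 h
        constructor
        · rw [← sub_eq_zero, ← neg_eq_zero, ← h]; abel
        · rw [hq2]; abel
      · rintro ⟨h, -⟩
        rw [← h]; abel
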